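/- arXiv:math/0205064 — 4 statements merged into one kernel-verified Lean document; each statement's English description precedes it below -/
import Mathlib

section
/- Let f : ℂ → ℂ be entire and let z1, z2 ∈ ℂ with z1 ≠ z2. Then for every z ∈ ℂ the two-point Taylor series of f at z1, z2 converges to f(z): the partial sums S_N(z) = Σ_{n=0}^{N−1} [a_n(z1,z2)(z−z1) + a_n(z2,z1)(z−z2)]·((z−z1)(z−z2))^n tend to f(z) as N → ∞. -/
/-- The two-point Taylor coefficient `a_n(z1, z2)` of `f` at the points `z1, z2`. -/
noncomputable def twoPointCoeff (f : ℂ → ℂ) (z1 z2 : ℂ) (n : ℕ) : ℂ :=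
  if n = 0 then f z2 / (z2 - z1)
  else ∑ k ∈ Finset.range (n + 1),
    ((Nat.factorial (n + k - 1) : ℂ) / ((Nat.factorial k : ℂ) * (Nat.factorial (n - k) : ℂ))) *
      (((-1 : ℂ) ^ (n + 1) * (n : ℂ) * iteratedDeriv (n - k) f z2
          + (-1 : ℂ) ^ k * (k : ℂ) * iteratedDeriv (n - k) f z1)
        / ((Nat.factorial n : ℂ) * (z1 - z2) ^ (n + k + 1)))

/-!
Expand the Cauchy kernel as a geometric series in `P z = (z - z1) * (z - z2)`: the quotient
`(P w - P z) / (w - z)` is affine in `w`, so `(1 - P z / P w) / (w - z)` is a combination of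
`(w - z1)⁻¹` and `(w - z2)⁻¹`. Integrating the `n`-th term against `f` over a circle gives integrals
of `f w / ((w - z1) ^ n * (w - z2) ^ (n + 1))` and of its mirror image, which repeated use of
`(w - z1)⁻¹ * (w - z2)⁻¹ = (z1 - z2)⁻¹ * ((w - z1)⁻¹ - (w - z2)⁻¹)` evaluates in terms of the
derivatives of `f` at `z1` and `z2`. The remainder carries the factor `(P z / P w) ^ N`, so it tends
to zero as soon as `‖P z‖ < ‖P w‖` on the circle, which holds for all large circles.
-/

open Filter Finset Metric Bornology
open Complex (I)
open scoped Nat Topology Real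

section PoleResidue

variable {K E : Type*} [Field K] [AddCommGroup E] [Module K E]

/-- The residue at `a` of `(∑ m, (w - a) ^ m • D m) / ((w - a) ^ p * (w - b) ^ q)`, where
`d = a - b`: the coefficient of `(w - a) ^ (p - 1)` in the product of `∑ m, (w - a) ^ m • D m` with
the binomial series of `(d + (w - a)) ^ (-q)`. The subtraction `p - 1 - j` never truncates. -/
def poleResidue (D : ℕ → E) (d : K) (p q : ℕ) : E :=
  ∑ j ∈ range p, ((-1) ^ j * (q.multichoose j : K) / d ^ (q + j)) • D (p - 1 - j)

theorem poleResidue_zero_left (D : ℕ → E) (d : K) (q : ℕ) : poleResidue D d 0 q = 0 := by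
  simp [poleResidue]

theorem poleResidue_succ_zero (D : ℕ → E) (d : K) (p : ℕ) : poleResidue D d (p + 1) 0 = D p := by
  simp [poleResidue, sum_range_succ']

theorem poleResidue_succ_succ (D : ℕ → E) (d : K) (p q : ℕ) :
    poleResidue D d (p + 1) (q + 1) =
      d⁻¹ • (poleResidue D d (p + 1) q - poleResidue D d p (q + 1)) := by
  simp only [poleResidue, sum_range_succ' _ p, add_sub_right_comm, ← sum_sub_distrib, smul_add,
    smul_sum]
  congr 1
  · refine sum_congr rfl fun j _ => ?_
    rw [show p + 1 - 1 - (j + 1) = p - 1 - j by lia, ← sub_smul, smul_smul,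
      Nat.multichoose_succ_succ]
    congr 1
    push_cast
    ring
  · simp [smul_smul, pow_succ]

theorem cast_multichoose_succ [CharZero K] (q j : ℕ) :
    ((q + 1).multichoose j : K) = (q + j)! / (j ! * q !) := by
  rw [Nat.multichoose_eq, show q + 1 + j - 1 = j + q by lia, Nat.cast_add_choose, add_comm j q]

theorem poleResidue_neg_add_two_add_one [CharZero K] (D : ℕ → E) (d : K) (m : ℕ) :
    poleResidue D (-d) (m + 2) (m + 1) = ∑ k ∈ range (m + 2),
      ((-1) ^ (m + 1) * ((m + k)! / (k ! * m !)) / d ^ (m + 1 + k)) • D (m + 1 - k) := by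
  refine sum_congr rfl fun k _ => ?_
  have sign : (-1 : K) ^ k / (-d) ^ (m + 1 + k) = (-1) ^ (m + 1) / d ^ (m + 1 + k) := by
    rw [neg_pow d, ← div_div, pow_add (-1) (m + 1), div_mul_cancel_right₀ (by simp), ← inv_pow,
      inv_neg_one]
  rw [cast_multichoose_succ, mul_div_right_comm, sign, mul_div_right_comm]
  rfl

theorem poleResidue_add_one_add_two [CharZero K] (D : ℕ → E) (d : K) (m : ℕ) :
    poleResidue D d (m + 1) (m + 2) = ∑ k ∈ range (m + 2),
      ((-1) ^ (k + 1) * (k * (m + k)! / (k ! * (m + 1)!)) / d ^ (m + 1 + k)) • D (m + 1 - k) := by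
  rw [sum_range_succ', poleResidue]
  simp only [Nat.cast_zero, zero_mul, zero_div, mul_zero, zero_smul, add_zero]
  refine sum_congr rfl fun j _ => ?_
  have factorial_shift : ((m + 1 + j)! / (j ! * (m + 1)!) : K) =
      (j + 1 : ℕ) * (m + (j + 1))! / ((j + 1)! * (m + 1)!) := by
    have : (j + 1 : K) ≠ 0 := by exact_mod_cast j.succ_ne_zero
    rw [Nat.factorial_succ j, show m + (j + 1) = m + 1 + j by lia]
    push_cast
    field_simp
  rw [cast_multichoose_succ, factorial_shift, show m + 1 - (j + 1) = m + 1 - 1 - j by lia]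
  congr 1
  ring

end PoleResidue

section TaylorCoeff

variable {𝕜 E : Type*} [NontriviallyNormedField 𝕜] [NormedAddCommGroup E] [NormedSpace 𝕜 E]

/-- The `n`-th Taylor coefficient of `f` at `a`; the factor `(n !)⁻¹` is a scalar in `𝕜`, so
`f` may be vector-valued. -/
noncomputable def taylorCoeff (f : 𝕜 → E) (a : 𝕜) (n : ℕ) : E :=
  (n ! : 𝕜)⁻¹ • iteratedDeriv n f a

theorem taylorCoeff_zero (f : 𝕜 → E) (a : 𝕜) : taylorCoeff f a 0 = f a := by
  simp [taylorCoeff]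

theorem coeff_eq_taylorCoeff [CharZero 𝕜] [CompleteSpace E] {f : 𝕜 → E} {a : 𝕜}
    {p : FormalMultilinearSeries 𝕜 𝕜 E} (hp : HasFPowerSeriesAt f p a) (n : ℕ) :
    p.coeff n = taylorCoeff f a n := by
  obtain ⟨r, hr⟩ := hp
  rw [taylorCoeff, eq_inv_smul_iff₀ (Nat.cast_ne_zero.mpr n.factorial_ne_zero),
    iteratedDeriv_eq_iteratedFDeriv, ← hr.factorial_smul, Nat.cast_smul_eq_nsmul]
  rfl

theorem taylorCoeff_dslope [CharZero 𝕜] [CompleteSpace E] {f : 𝕜 → E} {a : 𝕜}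
    (hf : AnalyticAt 𝕜 f a) (n : ℕ) :
    taylorCoeff (dslope f a) a n = taylorCoeff f a (n + 1) := by
  obtain ⟨p, hp⟩ := hf
  rw [← coeff_eq_taylorCoeff hp.has_fpower_series_dslope_fslope, ← coeff_eq_taylorCoeff hp,
    FormalMultilinearSeries.coeff_fslope]

end TaylorCoeff

section CauchyIntegral

variable {E : Type*} [NormedAddCommGroup E] [NormedSpace ℂ E] {f : ℂ → E} {a c : ℂ} {R : ℝ}

theorem sub_ne_zero_of_mem_sphere_of_mem_ball {F : Type*} [NormedAddCommGroup F] {a c w : F}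
    {R : ℝ} (hw : w ∈ sphere c R) (ha : a ∈ ball c R) : w - a ≠ 0 :=
  sub_ne_zero.mpr fun h => (mem_ball.mp ha).ne (h ▸ mem_sphere.mp hw)

theorem continuousOn_inv_sub_sphere {𝕜 : Type*} [NormedField 𝕜] {a c : 𝕜} {R : ℝ}
    (ha : a ∈ ball c R) : ContinuousOn (fun w => (w - a)⁻¹) (sphere c R) :=
  ContinuousOn.inv₀ (by fun_prop) fun _ hw => sub_ne_zero_of_mem_sphere_of_mem_ball hw ha

theorem circleIntegrable_smul_of_diffContOnCl {κ : ℂ → ℂ} (hR : 0 ≤ R)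
    (hκ : ContinuousOn κ (sphere c R)) (hf : DiffContOnCl ℂ f (ball c R)) :
    CircleIntegrable (fun w => κ w • f w) c R :=
  (hκ.smul (hf.continuousOn_ball.mono sphere_subset_closedBall)).circleIntegrable hR

theorem tendsto_circleIntegral_pow_smul_zero {κ : ℂ → ℂ} {g : ℂ → E} (hR : 0 ≤ R)
    (hκ : ContinuousOn κ (sphere c R)) (hg : ContinuousOn g (sphere c R))
    (hlt : ∀ w ∈ sphere c R, ‖κ w‖ < 1) :
    Tendsto (fun N : ℕ => ∮ w in C(c, R), κ w ^ N • g w) atTop (𝓝 0) := by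
  obtain ⟨v, hv, hmax⟩ := (isCompact_sphere c R).exists_isMaxOn
    (NormedSpace.sphere_nonempty.mpr hR) hκ.norm
  obtain ⟨M, hM⟩ := (isCompact_sphere c R).exists_bound_of_continuousOn hg
  have integral_le (N : ℕ) :
      ‖∮ w in C(c, R), κ w ^ N • g w‖ ≤ 2 * π * R * (‖κ v‖ ^ N * M) := by
    refine circleIntegral.norm_integral_le_of_norm_le_const hR fun w hw => ?_
    rw [norm_smul, norm_pow]
    gcongr
    exacts [hmax hw, hM w hw]
  refine squeeze_zero_norm integral_le ?_
  simpa using ((tendsto_pow_atTop_nhds_zero_of_lt_one (norm_nonneg _) (hlt v hv)).mul_const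
    M).const_mul (2 * π * R)

variable [CompleteSpace E]

theorem circleIntegral_inv_sub_pow_add_two_smul_const (a c : ℂ) (R : ℝ) (n : ℕ) (x : E) :
    (∮ w in C(c, R), (w - a)⁻¹ ^ (n + 2) • x) = 0 := by
  have zpow_eq (w : ℂ) : (w - a)⁻¹ ^ (n + 2) = (w - a) ^ (-(n + 2 : ℕ) : ℤ) := by
    rw [zpow_neg, zpow_natCast, inv_pow]
  simp only [zpow_eq]
  rw [circleIntegral.integral_smul_const, circleIntegral.integral_sub_zpow_of_ne (by lia),
    zero_smul]

theorem diffContOnCl_dslope (hf : DiffContOnCl ℂ f (ball c R)) (ha : a ∈ ball c R) :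
    DiffContOnCl ℂ (dslope f a) (ball c R) := by
  have ball_nhds : ball c R ∈ 𝓝 a := isOpen_ball.mem_nhds ha
  refine ⟨(Complex.differentiableOn_dslope ball_nhds).mpr hf.differentiableOn, ?_⟩
  exact (continuousOn_dslope (mem_of_superset ball_nhds subset_closure)).mpr
    ⟨hf.continuousOn, hf.differentiableAt isOpen_ball ha⟩

theorem circleIntegral_inv_sub_pow_add_two_smul (hf : DiffContOnCl ℂ f (ball c R))
    (ha : a ∈ ball c R) (n : ℕ) :
    (∮ w in C(c, R), (w - a)⁻¹ ^ (n + 2) • f w) =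
      ∮ w in C(c, R), (w - a)⁻¹ ^ (n + 1) • dslope f a w := by
  have hR := (pos_of_mem_ball ha).le
  have expand : Set.EqOn (fun w => (w - a)⁻¹ ^ (n + 2) • f w)
      (fun w => (w - a)⁻¹ ^ (n + 2) • f a + (w - a)⁻¹ ^ (n + 1) • dslope f a w)
      (sphere c R) := fun w hw => by
    have f_eq : f w = f a + (w - a) • dslope f a w := by
      rw [sub_smul_dslope, add_sub_cancel]
    have hwa := sub_ne_zero_of_mem_sphere_of_mem_ball hw ha
    simp only [f_eq, smul_add, smul_smul, pow_succ _ (n + 1), inv_mul_cancel_right₀ hwa]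
  have continuous_pow (m : ℕ) : ContinuousOn (fun w => (w - a)⁻¹ ^ m) (sphere c R) :=
    (continuousOn_inv_sub_sphere ha).pow m
  rw [circleIntegral.integral_congr hR expand,
    circleIntegral.integral_add
      (circleIntegrable_smul_of_diffContOnCl hR (continuous_pow _) diffContOnCl_const)
      (circleIntegrable_smul_of_diffContOnCl hR (continuous_pow _) (diffContOnCl_dslope hf ha)),
    circleIntegral_inv_sub_pow_add_two_smul_const, zero_add]

theorem circleIntegral_inv_sub_pow_succ_smul (hf : DiffContOnCl ℂ f (ball c R))
    (ha : a ∈ ball c R) (n : ℕ) :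
    (∮ w in C(c, R), (w - a)⁻¹ ^ (n + 1) • f w) = (2 * π * I : ℂ) • taylorCoeff f a n := by
  induction n generalizing f with
  | zero => simpa [taylorCoeff_zero] using hf.circleIntegral_sub_inv_smul ha
  | succ n ih =>
    rw [circleIntegral_inv_sub_pow_add_two_smul hf ha, ih (diffContOnCl_dslope hf ha),
      taylorCoeff_dslope (hf.differentiableOn.analyticAt (isOpen_ball.mem_nhds ha))]

end CauchyIntegral

section TwoPointResidue

variable {𝕜 E : Type*} [NontriviallyNormedField 𝕜] [NormedAddCommGroup E] [NormedSpace 𝕜 E]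

/-- The sum of the residues at `a` and `b` of `f w / ((w - a) ^ p * (w - b) ^ q)`, given explicitly
in terms of the Taylor coefficients of `f`. -/
noncomputable def twoPointResidue (f : 𝕜 → E) (a b : 𝕜) (p q : ℕ) : E :=
  poleResidue (taylorCoeff f a) (a - b) p q + poleResidue (taylorCoeff f b) (b - a) q p

theorem twoPointResidue_comm (f : 𝕜 → E) (a b : 𝕜) (p q : ℕ) :
    twoPointResidue f a b p q = twoPointResidue f b a q p :=
  add_comm _ _

theorem twoPointResidue_zero_zero (f : 𝕜 → E) (a b : 𝕜) : twoPointResidue f a b 0 0 = 0 := by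
  simp [twoPointResidue, poleResidue_zero_left]

theorem twoPointResidue_succ_zero (f : 𝕜 → E) (a b : 𝕜) (p : ℕ) :
    twoPointResidue f a b (p + 1) 0 = taylorCoeff f a p := by
  simp [twoPointResidue, poleResidue_zero_left, poleResidue_succ_zero]

theorem twoPointResidue_succ_succ (f : 𝕜 → E) (a b : 𝕜) (p q : ℕ) :
    twoPointResidue f a b (p + 1) (q + 1) =
      (a - b)⁻¹ • (twoPointResidue f a b (p + 1) q - twoPointResidue f a b p (q + 1)) := by
  have inv_sub_comm : (b - a)⁻¹ = -(a - b)⁻¹ := by rw [← inv_neg, neg_sub]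
  simp only [twoPointResidue, poleResidue_succ_succ, inv_sub_comm]
  module

end TwoPointResidue

section TwoPointCauchyIntegral

variable {E : Type*} [NormedAddCommGroup E] [NormedSpace ℂ E] {f : ℂ → E} {a b c : ℂ} {R : ℝ}

theorem circleIntegrable_inv_pow_mul_inv_pow_smul (hf : DiffContOnCl ℂ f (ball c R))
    (ha : a ∈ ball c R) (hb : b ∈ ball c R) (p q : ℕ) :
    CircleIntegrable (fun w => ((w - a)⁻¹ ^ p * (w - b)⁻¹ ^ q) • f w) c R :=
  circleIntegrable_smul_of_diffContOnCl (pos_of_mem_ball ha).le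
    (((continuousOn_inv_sub_sphere ha).pow p).mul ((continuousOn_inv_sub_sphere hb).pow q)) hf

theorem inv_sub_mul_inv_sub {K : Type*} [Field K] {a b w : K} (hab : a ≠ b) (ha : w - a ≠ 0)
    (hb : w - b ≠ 0) : (w - a)⁻¹ * (w - b)⁻¹ = (a - b)⁻¹ * ((w - a)⁻¹ - (w - b)⁻¹) := by
  have := sub_ne_zero.mpr hab
  field_simp
  ring

theorem circleIntegral_inv_pow_succ_mul_inv_pow_succ_smul (hf : DiffContOnCl ℂ f (ball c R))
    (ha : a ∈ ball c R) (hb : b ∈ ball c R) (hab : a ≠ b) (p q : ℕ) :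
    (∮ w in C(c, R), ((w - a)⁻¹ ^ (p + 1) * (w - b)⁻¹ ^ (q + 1)) • f w) =
      (a - b)⁻¹ • ((∮ w in C(c, R), ((w - a)⁻¹ ^ (p + 1) * (w - b)⁻¹ ^ q) • f w) -
        ∮ w in C(c, R), ((w - a)⁻¹ ^ p * (w - b)⁻¹ ^ (q + 1)) • f w) := by
  have hR := (pos_of_mem_ball ha).le
  have integrable := circleIntegrable_inv_pow_mul_inv_pow_smul hf ha hb
  rw [← circleIntegral.integral_sub (integrable _ _) (integrable _ _),
    ← circleIntegral.integral_smul]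
  refine circleIntegral.integral_congr hR fun w hw => ?_
  have partial_fractions := inv_sub_mul_inv_sub hab (sub_ne_zero_of_mem_sphere_of_mem_ball hw ha)
    (sub_ne_zero_of_mem_sphere_of_mem_ball hw hb)
  simp only [← sub_smul, smul_smul]
  congr 1
  linear_combination ((w - a)⁻¹ ^ p * (w - b)⁻¹ ^ q) * partial_fractions

theorem circleIntegral_inv_pow_mul_inv_pow_smul [CompleteSpace E]
    (hf : DiffContOnCl ℂ f (ball c R)) (ha : a ∈ ball c R) (hb : b ∈ ball c R) (hab : a ≠ b)
    (p q : ℕ) :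
    (∮ w in C(c, R), ((w - a)⁻¹ ^ p * (w - b)⁻¹ ^ q) • f w) =
      (2 * π * I : ℂ) • twoPointResidue f a b p q := by
  induction p generalizing q with
  | zero =>
    cases q with
    | zero =>
      simpa [twoPointResidue_zero_zero] using hf.circleIntegral_eq_zero (pos_of_mem_ball ha).le
    | succ q =>
      simpa [twoPointResidue_comm f a, twoPointResidue_succ_zero] using
        circleIntegral_inv_sub_pow_succ_smul hf hb q
  | succ p ihp =>
    induction q with
    | zero =>
      simpa [twoPointResidue_succ_zero] using circleIntegral_inv_sub_pow_succ_smul hf ha p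
    | succ q ihq =>
      rw [circleIntegral_inv_pow_succ_mul_inv_pow_succ_smul hf ha hb hab, ihp, ihq,
        twoPointResidue_succ_succ, ← smul_sub, smul_comm]

theorem twoPointCoeff_eq_inv_mul_twoPointResidue (f : ℂ → ℂ) (hab : a ≠ b) (n : ℕ) :
    twoPointCoeff f a b n = (b - a)⁻¹ * twoPointResidue f a b n (n + 1) := by
  have hsub : a - b ≠ 0 := sub_ne_zero.mpr hab
  cases n with
  | zero =>
    rw [twoPointResidue_comm, twoPointResidue_succ_zero, taylorCoeff_zero, twoPointCoeff,
      if_pos rfl, div_eq_inv_mul]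
  | succ m =>
    rw [twoPointResidue, ← neg_sub a b, poleResidue_neg_add_two_add_one,
      poleResidue_add_one_add_two, ← sum_add_distrib, mul_sum, twoPointCoeff,
      if_neg m.succ_ne_zero]
    refine sum_congr rfl fun k _ => ?_
    have : (m + 1 : ℂ) ≠ 0 := by exact_mod_cast m.succ_ne_zero
    simp only [taylorCoeff, smul_eq_mul, show m + 1 + k - 1 = m + k by lia, Nat.factorial_succ m]
    push_cast
    field_simp
    ring

end TwoPointCauchyIntegral

section TwoPointTaylor

/-- The common ratio of the geometric series in `(z - z1) * (z - z2)` that expands the Cauchy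
kernel `(w - z)⁻¹`. -/
def twoPointRatio {K : Type*} [Field K] (z1 z2 z w : K) : K :=
  (z - z1) * (z - z2) / ((w - z1) * (w - z2))

theorem one_sub_twoPointRatio_mul_inv_sub {K : Type*} [Field K] {z1 z2 z w : K} (h12 : z1 ≠ z2)
    (h1 : w - z1 ≠ 0) (h2 : w - z2 ≠ 0) (hz : w - z ≠ 0) :
    (1 - twoPointRatio z1 z2 z w) * (w - z)⁻¹ =
      (z - z1) / (z2 - z1) * (w - z2)⁻¹ + (z - z2) / (z1 - z2) * (w - z1)⁻¹ := by
  have h21 : z2 - z1 ≠ 0 := sub_ne_zero.mpr h12.symm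
  rw [twoPointRatio, ← neg_sub z2 z1, div_neg]
  field_simp
  ring

theorem twoPointRatio_pow_mul_inv_sub_sub {K : Type*} [Field K] {z1 z2 z w : K} (h12 : z1 ≠ z2)
    (h1 : w - z1 ≠ 0) (h2 : w - z2 ≠ 0) (hz : w - z ≠ 0) (n : ℕ) :
    twoPointRatio z1 z2 z w ^ n * (w - z)⁻¹ - twoPointRatio z1 z2 z w ^ (n + 1) * (w - z)⁻¹ =
      ((z - z1) * (z - z2)) ^ n *
        ((z - z1) / (z2 - z1) * ((w - z1)⁻¹ ^ n * (w - z2)⁻¹ ^ (n + 1)) +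
          (z - z2) / (z1 - z2) * ((w - z2)⁻¹ ^ n * (w - z1)⁻¹ ^ (n + 1))) := by
  have ratio_pow : twoPointRatio z1 z2 z w ^ n =
      ((z - z1) * (z - z2)) ^ n * ((w - z1)⁻¹ ^ n * (w - z2)⁻¹ ^ n) := by
    rw [twoPointRatio, div_eq_mul_inv, mul_inv, mul_pow _ (_ * _), mul_pow (w - z1)⁻¹]
  have kernel := one_sub_twoPointRatio_mul_inv_sub h12 h1 h2 hz
  rw [pow_succ (twoPointRatio z1 z2 z w), ratio_pow]
  linear_combination
    (((z - z1) * (z - z2)) ^ n * ((w - z1)⁻¹ ^ n * (w - z2)⁻¹ ^ n)) * kernel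

theorem continuousOn_twoPointRatio_sphere {𝕜 : Type*} [NormedField 𝕜] {z1 z2 z c : 𝕜} {R : ℝ}
    (h1 : z1 ∈ ball c R) (h2 : z2 ∈ ball c R) :
    ContinuousOn (twoPointRatio z1 z2 z) (sphere c R) :=
  ContinuousOn.div (by fun_prop) (by fun_prop) fun _ hw =>
    mul_ne_zero (sub_ne_zero_of_mem_sphere_of_mem_ball hw h1)
      (sub_ne_zero_of_mem_sphere_of_mem_ball hw h2)

theorem tendsto_norm_sub_mul_sub_cobounded {𝕜 : Type*} [NormedField 𝕜] (z1 z2 : 𝕜) :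
    Tendsto (fun w => ‖(w - z1) * (w - z2)‖) (cobounded 𝕜) atTop := by
  have tendsto_norm_sub (a : 𝕜) : Tendsto (fun w => ‖w - a‖) (cobounded 𝕜) atTop :=
    tendsto_norm_cobounded_atTop.comp (tendsto_sub_const_cobounded a)
  simpa only [norm_mul] using (tendsto_norm_sub z1).atTop_mul_atTop₀ (tendsto_norm_sub z2)

theorem exists_radius_norm_lt_on_sphere {𝕜 : Type*} [NormedField 𝕜] (z1 z2 z : 𝕜) :
    ∃ R : ℝ, z1 ∈ ball 0 R ∧ z2 ∈ ball 0 R ∧ z ∈ ball 0 R ∧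
      ∀ w ∈ sphere 0 R, ‖(z - z1) * (z - z2)‖ < ‖(w - z1) * (w - z2)‖ := by
  have eventually_lt :=
    (tendsto_norm_sub_mul_sub_cobounded z1 z2).eventually_gt_atTop ‖(z - z1) * (z - z2)‖
  rw [← comap_norm_atTop, eventually_comap] at eventually_lt
  simpa only [mem_ball_zero_iff, mem_sphere_zero_iff_norm] using
    ((eventually_gt_atTop ‖z1‖).and ((eventually_gt_atTop ‖z2‖).and
      ((eventually_gt_atTop ‖z‖).and eventually_lt))).exists

variable {E : Type*} [NormedAddCommGroup E] [NormedSpace ℂ E] {f : ℂ → E} {z1 z2 z c : ℂ} {R : ℝ}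

/-- The `n`-th term of the two-point Taylor series of a vector-valued function, in which
`(z2 - z1)⁻¹ • twoPointResidue f z1 z2 n (n + 1)` is the coefficient `a_n(z1, z2)`. -/
noncomputable def twoPointTaylorTerm (f : ℂ → E) (z1 z2 z : ℂ) (n : ℕ) : E :=
  ((z - z1) * (z - z2)) ^ n • (((z - z1) / (z2 - z1)) • twoPointResidue f z1 z2 n (n + 1) +
    ((z - z2) / (z1 - z2)) • twoPointResidue f z2 z1 n (n + 1))

theorem twoPointTaylorTerm_eq_twoPointCoeff (f : ℂ → ℂ) (h12 : z1 ≠ z2) (z : ℂ) (n : ℕ) :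
    twoPointTaylorTerm f z1 z2 z n =
      (twoPointCoeff f z1 z2 n * (z - z1) + twoPointCoeff f z2 z1 n * (z - z2)) *
        ((z - z1) * (z - z2)) ^ n := by
  simp only [twoPointTaylorTerm, twoPointCoeff_eq_inv_mul_twoPointResidue f h12,
    twoPointCoeff_eq_inv_mul_twoPointResidue f h12.symm, smul_eq_mul]
  ring

variable [CompleteSpace E]

theorem circleIntegral_twoPointRatio_pow_sub (hf : DiffContOnCl ℂ f (ball c R)) (h12 : z1 ≠ z2)
    (h1 : z1 ∈ ball c R) (h2 : z2 ∈ ball c R) (hz : z ∈ ball c R) (n : ℕ) :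
    (∮ w in C(c, R), twoPointRatio z1 z2 z w ^ n • (w - z)⁻¹ • f w) -
        (∮ w in C(c, R), twoPointRatio z1 z2 z w ^ (n + 1) • (w - z)⁻¹ • f w) =
      (2 * π * I : ℂ) • twoPointTaylorTerm f z1 z2 z n := by
  have hR := (pos_of_mem_ball hz).le
  have integrable (m : ℕ) :
      CircleIntegrable (fun w => twoPointRatio z1 z2 z w ^ m • (w - z)⁻¹ • f w) c R := by
    simpa only [smul_smul, Pi.mul_apply, Pi.pow_apply] using
      circleIntegrable_smul_of_diffContOnCl hR
        (((continuousOn_twoPointRatio_sphere h1 h2).pow m).mul (continuousOn_inv_sub_sphere hz))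
        hf
  have integrable_mixed {a b : ℂ} (r : ℂ) (ha : a ∈ ball c R) (hb : b ∈ ball c R) :
      CircleIntegrable (fun w => r • ((w - a)⁻¹ ^ n * (w - b)⁻¹ ^ (n + 1)) • f w) c R :=
    (circleIntegrable_inv_pow_mul_inv_pow_smul hf ha hb n (n + 1)).continuousOn_smul
      continuousOn_const
  rw [twoPointTaylorTerm, smul_comm, smul_add, smul_comm _ ((z - z1) / (z2 - z1)),
    smul_comm _ ((z - z2) / (z1 - z2)), ← circleIntegral_inv_pow_mul_inv_pow_smul hf h1 h2 h12,
    ← circleIntegral_inv_pow_mul_inv_pow_smul hf h2 h1 h12.symm,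
    ← circleIntegral.integral_sub (integrable n) (integrable (n + 1)),
    ← circleIntegral.integral_smul, ← circleIntegral.integral_smul,
    ← circleIntegral.integral_add (integrable_mixed _ h1 h2) (integrable_mixed _ h2 h1),
    ← circleIntegral.integral_smul]
  refine circleIntegral.integral_congr hR fun w hw => ?_
  simp only [smul_smul, ← sub_smul, ← add_smul]
  rw [twoPointRatio_pow_mul_inv_sub_sub h12 (sub_ne_zero_of_mem_sphere_of_mem_ball hw h1)
    (sub_ne_zero_of_mem_sphere_of_mem_ball hw h2) (sub_ne_zero_of_mem_sphere_of_mem_ball hw hz)]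

theorem sum_range_twoPointTaylorTerm (hf : DiffContOnCl ℂ f (ball c R)) (h12 : z1 ≠ z2)
    (h1 : z1 ∈ ball c R) (h2 : z2 ∈ ball c R) (hz : z ∈ ball c R) (N : ℕ) :
    ∑ n ∈ range N, twoPointTaylorTerm f z1 z2 z n = f z - (2 * π * I : ℂ)⁻¹ •
      ∮ w in C(c, R), twoPointRatio z1 z2 z w ^ N • (w - z)⁻¹ • f w := by
  have telescope := sum_range_sub'
    (fun n => ∮ w in C(c, R), twoPointRatio z1 z2 z w ^ n • (w - z)⁻¹ • f w) N
  simp only [circleIntegral_twoPointRatio_pow_sub hf h12 h1 h2 hz, ← smul_sum, pow_zero, one_smul,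
    hf.circleIntegral_sub_inv_smul hz] at telescope
  rw [← inv_smul_smul₀ Complex.two_pi_I_ne_zero (∑ n ∈ range N, _), telescope, smul_sub,
    inv_smul_smul₀ Complex.two_pi_I_ne_zero]

theorem twoPointTaylor_tendsto_of_entire_general (hf : DiffContOnCl ℂ f (ball c R))
    (h12 : z1 ≠ z2) (h1 : z1 ∈ ball c R) (h2 : z2 ∈ ball c R) (hz : z ∈ ball c R)
    (hlt : ∀ w ∈ sphere c R, ‖(z - z1) * (z - z2)‖ < ‖(w - z1) * (w - z2)‖) :
    Tendsto (fun N : ℕ => ∑ n ∈ range N, twoPointTaylorTerm f z1 z2 z n) atTop (𝓝 (f z)) := by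
  have ratio_lt_one : ∀ w ∈ sphere c R, ‖twoPointRatio z1 z2 z w‖ < 1 := fun w hw => by
    rw [twoPointRatio, norm_div, div_lt_one ((norm_nonneg _).trans_lt (hlt w hw))]
    exact hlt w hw
  have remainder_tendsto := tendsto_circleIntegral_pow_smul_zero (pos_of_mem_ball hz).le
    (continuousOn_twoPointRatio_sphere h1 h2) ((continuousOn_inv_sub_sphere hz).smul
      (hf.continuousOn_ball.mono sphere_subset_closedBall)) ratio_lt_one
  simpa [sum_range_twoPointTaylorTerm hf h12 h1 h2 hz] using
    (remainder_tendsto.const_smul (2 * π * I : ℂ)⁻¹).const_sub (f z)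

end TwoPointTaylor

/-- The two-point Taylor expansion of an entire function converges everywhere. -/
theorem twoPointTaylor_tendsto_of_entire
    (f : ℂ → ℂ) (hf : Differentiable ℂ f)
    (z1 z2 : ℂ) (h12 : z1 ≠ z2) (z : ℂ) :
    Filter.Tendsto
      (fun N : ℕ => ∑ n ∈ Finset.range N,
        (twoPointCoeff f z1 z2 n * (z - z1) + twoPointCoeff f z2 z1 n * (z - z2)) *
          ((z - z1) * (z - z2)) ^ n)
      Filter.atTop (nhds (f z)) := by
  obtain ⟨R, h1, h2, hz, hlt⟩ := exists_radius_norm_lt_on_sphere z1 z2 z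
  simpa only [twoPointTaylorTerm_eq_twoPointCoeff f h12] using
    twoPointTaylor_tendsto_of_entire_general hf.diffContOnCl h12 h1 h2 hz hlt
end

section
/- Let z1 ≠ z2 be complex numbers and let f : ℂ → ℂ be analytic at z1 and at z2. Then for every n ≥ 1, (1/(z2−z1)) · [ (1/(n−1)!) · D^{n−1}( w ↦ f(w)/(w−z2)^{n+1} )(z1) + (1/n!) · D^{n}( w ↦ f(w)/(w−z1)^{n} )(z2) ] = Σ_{k=0}^{n} ((n+k−1)!/(k!(n−k)!)) · ((−1)^{n+1}·n·f^{(n−k)}(z2) + (−1)^k·k·f^{(n−k)}(z1)) / (n!·(z1−z2)^{n+k+1}), where D^{j}h(a) denotes the j-th iterated derivative of h at a. -/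
/-!
The residue at `a` of `f w / ((w - a) ^ (N + 1) * (w - b) ^ p)` is the `N`-th Taylor coefficient at
`a` of `f w / (w - b) ^ p`, hence the Cauchy product of the Taylor coefficients of `f` with those of
the binomial series `(w - b) ^ (-p)`. Here `(N, p)` is `(n - 1, n + 1)` at `z1` and `(n, n)` at
`z2`. Shifting the index of the sum at `z1` by one gives both sums the denominators
`(z1 - z2) ^ (n + k + 1)`; it turns `1 / (k - 1)!` into `k / k!`, so that the sum at `z1` may also
start at `k = 0`.
-/

open scoped Nat

section TwoPointTaylor

variable {𝕜 F : Type*} [NontriviallyNormedField 𝕜] [NormedAddCommGroup F] [NormedSpace 𝕜 F]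

lemma iteratedDeriv_inv_sub_pow (p k : ℕ) (a b : 𝕜) :
    iteratedDeriv k (fun w => ((w - b) ^ p)⁻¹) a =
      (-1) ^ k * p.ascFactorial k / (a - b) ^ (p + k) := by
  have prod_sub_eq : ∏ i ∈ Finset.range k, (((-p : ℤ) : 𝕜) - i) = (-1) ^ k * p.ascFactorial k := by
    simp only [Int.cast_neg, Int.cast_natCast, ← neg_add', Finset.prod_neg, Finset.card_range,
      Nat.ascFactorial_eq_prod_range, Nat.cast_prod, Nat.cast_add]
  calc iteratedDeriv k (fun w => ((w - b) ^ p)⁻¹) a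
      = deriv^[k] (fun w : 𝕜 => w ^ (-p : ℤ)) (a - b) := by
        simp only [← iteratedDeriv_eq_iterate, zpow_neg, zpow_natCast,
          iteratedDeriv_comp_sub_const k (fun w : 𝕜 => (w ^ p)⁻¹) b]
    _ = (-1) ^ k * p.ascFactorial k * (a - b) ^ (-p - k : ℤ) := by
        rw [iter_deriv_zpow, prod_sub_eq]
    _ = (-1) ^ k * p.ascFactorial k / (a - b) ^ (p + k) := by
        rw [← neg_add', ← Nat.cast_add, zpow_neg, zpow_natCast, div_eq_mul_inv]

lemma iteratedDeriv_fun_smul {𝔸 : Type*} [NormedRing 𝔸] [NormedAlgebra 𝕜 𝔸] [Module 𝔸 F]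
    [IsBoundedSMul 𝔸 F] [IsScalarTower 𝕜 𝔸 F] {n : ℕ} {c : 𝕜 → 𝔸} {f : 𝕜 → F} {a : 𝕜}
    (hc : ContDiffAt 𝕜 n c a) (hf : ContDiffAt 𝕜 n f a) :
    iteratedDeriv n (fun w => c w • f w) a =
      ∑ k ∈ Finset.range (n + 1),
        n.choose k • iteratedDeriv k c a • iteratedDeriv (n - k) f a := by
  simp only [← iteratedDerivWithin_univ]
  exact iteratedDerivWithin_smul (Set.mem_univ a) uniqueDiffOn_univ hc hf

variable [CharZero 𝕜]

lemma inv_factorial_smul_iteratedDeriv_inv_sub_pow_smul {f : 𝕜 → F} {a b : 𝕜} (hab : a ≠ b)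
    {N : ℕ} (hf : ContDiffAt 𝕜 N f a) (p : ℕ) :
    (N ! : 𝕜)⁻¹ • iteratedDeriv N (fun w => ((w - b) ^ p)⁻¹ • f w) a =
      ∑ k ∈ Finset.range (N + 1),
        ((-1) ^ k * p.ascFactorial k / (k ! * (N - k)! * (a - b) ^ (p + k)) : 𝕜) •
          iteratedDeriv (N - k) f a := by
  have hinv : ContDiffAt 𝕜 N (fun w => ((w - b) ^ p)⁻¹) a :=
    ContDiffAt.inv (by fun_prop) (pow_ne_zero p (sub_ne_zero.2 hab))
  rw [iteratedDeriv_fun_smul hinv hf, Finset.smul_sum]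
  refine Finset.sum_congr rfl fun k hk => ?_
  have hkN : k ≤ N := Finset.mem_range_succ_iff.1 hk
  rw [iteratedDeriv_inv_sub_pow, ← Nat.cast_smul_eq_nsmul 𝕜, Nat.cast_choose 𝕜 hkN, smul_smul,
    smul_smul]
  congr 1
  field_simp [Nat.factorial_ne_zero]

variable {f : 𝕜 → F} {z1 z2 : 𝕜} {n : ℕ}

lemma twoPointCoeff_residue_left_eq_sum (h12 : z1 ≠ z2)
    (hf1 : ContDiffAt 𝕜 (n - 1 : ℕ) f z1) (hn : 1 ≤ n) :
    (z2 - z1)⁻¹ • ((n - 1)! : 𝕜)⁻¹ •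
        iteratedDeriv (n - 1) (fun w => ((w - z2) ^ (n + 1))⁻¹ • f w) z1 =
      ∑ k ∈ Finset.range (n + 1), ((n + k - 1)! / (k ! * (n - k)!) : 𝕜) •
        (n ! * (z1 - z2) ^ (n + k + 1))⁻¹ • ((-1) ^ k * k : 𝕜) • iteratedDeriv (n - k) f z1 := by
  obtain ⟨m, rfl⟩ := Nat.exists_eq_add_of_le' hn
  have hd : z1 - z2 ≠ 0 := sub_ne_zero.2 h12
  rw [inv_factorial_smul_iteratedDeriv_inv_sub_pow_smul h12 hf1, Nat.add_sub_cancel,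
    Finset.smul_sum, Finset.sum_range_succ' _ (m + 1)]
  simp only [Nat.cast_zero, mul_zero, zero_smul, smul_zero, add_zero, Nat.add_sub_add_right]
  refine Finset.sum_congr rfl fun k _ => ?_
  have hasc : ((m + 1)! : 𝕜) * (m + 1 + 1).ascFactorial k = (m + 1 + k)! := by
    exact_mod_cast Nat.factorial_mul_ascFactorial (m + 1) k
  have hk : ((k : 𝕜) + 1) ≠ 0 := Nat.cast_add_one_ne_zero k
  rw [← add_assoc (m + 1) k 1, Nat.add_sub_cancel, ← hasc, ← neg_sub z1 z2, Nat.factorial_succ k]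
  simp only [smul_smul]
  congr 1
  push_cast
  field_simp [Nat.factorial_ne_zero]
  ring

lemma twoPointCoeff_residue_right_eq_sum (h12 : z1 ≠ z2) (hf2 : ContDiffAt 𝕜 n f z2) (hn : 1 ≤ n) :
    (z2 - z1)⁻¹ • (n ! : 𝕜)⁻¹ • iteratedDeriv n (fun w => ((w - z1) ^ n)⁻¹ • f w) z2 =
      ∑ k ∈ Finset.range (n + 1), ((n + k - 1)! / (k ! * (n - k)!) : 𝕜) •
        (n ! * (z1 - z2) ^ (n + k + 1))⁻¹ • ((-1) ^ (n + 1) * n : 𝕜) •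
          iteratedDeriv (n - k) f z2 := by
  have hd : z1 - z2 ≠ 0 := sub_ne_zero.2 h12
  rw [inv_factorial_smul_iteratedDeriv_inv_sub_pow_smul h12.symm hf2, Finset.smul_sum]
  refine Finset.sum_congr rfl fun k _ => ?_
  have hasc : ((n - 1)! : 𝕜) * n.ascFactorial k = (n + k - 1)! := by
    exact_mod_cast Nat.factorial_mul_ascFactorial' n k hn
  have hfact : (n : 𝕜) * (n - 1)! = n ! := by
    exact_mod_cast Nat.mul_factorial_pred (Nat.one_le_iff_ne_zero.1 hn)
  have hn0 : (n : 𝕜) ≠ 0 := Nat.cast_ne_zero.2 (Nat.one_le_iff_ne_zero.1 hn)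
  have hsign : (z2 - z1) ^ (n + k) = (-1) ^ n * (-1) ^ k * (z1 - z2) ^ (n + k) := by
    rw [← neg_sub z1 z2, neg_pow, pow_add (-1)]
  have hsq : ((-1 : 𝕜) ^ n) ^ 2 = 1 := by rw [pow_right_comm, neg_one_sq, one_pow]
  rw [← hasc, ← hfact, hsign, ← neg_sub z1 z2]
  simp only [smul_smul]
  congr 1
  field_simp [Nat.factorial_ne_zero]
  linear_combination (n.ascFactorial k * (z1 - z2) ^ (n + k + 1)) * hsq

theorem twoPointCoeff_eq_residue_sum_general (h12 : z1 ≠ z2)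
    (hf1 : ContDiffAt 𝕜 (n - 1 : ℕ) f z1) (hf2 : ContDiffAt 𝕜 n f z2) (hn : 1 ≤ n) :
    (z2 - z1)⁻¹ •
      (((n - 1)! : 𝕜)⁻¹ • iteratedDeriv (n - 1) (fun w => ((w - z2) ^ (n + 1))⁻¹ • f w) z1
        + (n ! : 𝕜)⁻¹ • iteratedDeriv n (fun w => ((w - z1) ^ n)⁻¹ • f w) z2) =
      ∑ k ∈ Finset.range (n + 1), ((n + k - 1)! / (k ! * (n - k)!) : 𝕜) •
        (n ! * (z1 - z2) ^ (n + k + 1))⁻¹ •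
          (((-1) ^ (n + 1) * n : 𝕜) • iteratedDeriv (n - k) f z2
            + ((-1) ^ k * k : 𝕜) • iteratedDeriv (n - k) f z1) := by
  simp only [smul_add, Finset.sum_add_distrib]
  rw [twoPointCoeff_residue_left_eq_sum h12 hf1 hn,
    twoPointCoeff_residue_right_eq_sum h12 hf2 hn, add_comm]

end TwoPointTaylor

/-- Explicit formula for the two-point Taylor coefficients `a_n(z1,z2)`, `n ≥ 1`:
the sum of the residues at `z1` and `z2` of `f(w)/((w−z1)^n (w−z2)^{n+1})`,
divided by `(z2−z1)`, equals the explicit finite double sum. -/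
theorem twoPointCoeff_eq_residue_sum
    (f : ℂ → ℂ) (z1 z2 : ℂ) (h12 : z1 ≠ z2)
    (hf1 : AnalyticAt ℂ f z1) (hf2 : AnalyticAt ℂ f z2)
    (n : ℕ) (hn : 1 ≤ n) :
    (1 / (z2 - z1)) *
      ((1 / (Nat.factorial (n - 1) : ℂ)) *
          iteratedDeriv (n - 1) (fun w => f w / (w - z2) ^ (n + 1)) z1
        + (1 / (Nat.factorial n : ℂ)) *
          iteratedDeriv n (fun w => f w / (w - z1) ^ n) z2)
    = ∑ k ∈ Finset.range (n + 1),
        ((Nat.factorial (n + k - 1) : ℂ) / ((Nat.factorial k : ℂ) * (Nat.factorial (n - k) : ℂ))) *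
          (((-1 : ℂ) ^ (n + 1) * (n : ℂ) * iteratedDeriv (n - k) f z2
              + (-1 : ℂ) ^ k * (k : ℂ) * iteratedDeriv (n - k) f z1)
            / ((Nat.factorial n : ℂ) * (z1 - z2) ^ (n + k + 1))) := by
  simpa only [smul_eq_mul, div_eq_inv_mul, mul_one] using
    twoPointCoeff_eq_residue_sum_general h12 hf1.contDiffAt hf2.contDiffAt hn
end

section
/- Let z1 ≠ z2 be complex numbers, m ≥ 1 a natural number, and let g be analytic at z1. Then for every n with 0 ≤ n ≤ m−1, (z1−z2)·(1/(m−n−1)!)·D^{m−n−1}( w ↦ g(w)/(w−z2)^{n+1} )(z1) = ((−1)^n/n!)·Σ_{k=0}^{m−n−1} ((n+k)!/(k!(m−n−k−1)!))·g^{(m−n−k−1)}(z1)/(z2−z1)^{n+k}. -/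
/-!
Up to the sign `(-1) ^ (n + 1)`, the function `(w - z2) ^ (-n - 1)` is `(z2 - w) ^ (-n - 1)`, whose
`k`-th Taylor coefficient at `z1` is `(n + k).choose k / (z2 - z1) ^ (n + 1 + k)`. The Leibniz rule
says that Taylor coefficients of a product are Cauchy products, which gives the sum; the factor
`z1 - z2` cancels one power of `z2 - z1` and one sign.
-/

open Finset Nat

section

variable {𝕜 : Type*} [NontriviallyNormedField 𝕜]

theorem iteratedDeriv_inv_pow (p k : ℕ) (x : 𝕜) :
    iteratedDeriv k (fun w : 𝕜 ↦ (w ^ p)⁻¹) x = (-1) ^ k * p.ascFactorial k / x ^ (p + k) := by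
  have inv_pow_eq_zpow (w : 𝕜) (j : ℕ) : (w ^ j)⁻¹ = w ^ (-j : ℤ) := by
    rw [zpow_neg, zpow_natCast]
  have prod_eq_ascFactorial :
      ∏ i ∈ range k, (((-p : ℤ) : 𝕜) - i) = (-1) ^ k * p.ascFactorial k := by
    induction k with
    | zero => simp
    | succ k ih =>
      rw [prod_range_succ, ih, ascFactorial_succ]
      push_cast
      ring
  rw [div_eq_mul_inv, inv_pow_eq_zpow x, funext (inv_pow_eq_zpow · p), iteratedDeriv_eq_iterate,
    iter_deriv_zpow, prod_eq_ascFactorial, Nat.cast_add, neg_add']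

theorem iteratedDeriv_inv_const_sub_pow (a x : 𝕜) (p k : ℕ) :
    iteratedDeriv k (fun w ↦ ((a - w) ^ p)⁻¹) x = p.ascFactorial k / (a - x) ^ (p + k) := by
  rw [iteratedDeriv_comp_const_sub k (fun w : 𝕜 ↦ (w ^ p)⁻¹) a]
  simp only [iteratedDeriv_inv_pow, smul_eq_mul]
  rw [mul_div_assoc, ← mul_assoc, ← mul_pow, neg_one_mul, neg_neg, one_pow, one_mul]

variable [CharZero 𝕜]

theorem iteratedDeriv_inv_const_sub_pow_succ_div_factorial (a x : 𝕜) (n k : ℕ) :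
    iteratedDeriv k (fun w ↦ ((a - w) ^ (n + 1))⁻¹) x / k ! =
      (n + k).choose k / (a - x) ^ (n + 1 + k) := by
  have hk : (k ! : 𝕜) ≠ 0 := mod_cast k.factorial_ne_zero
  rw [iteratedDeriv_inv_const_sub_pow, ascFactorial_eq_factorial_mul_choose, Nat.cast_mul,
    mul_div_assoc, mul_div_cancel_left₀ _ hk]

variable {x : 𝕜} {N : ℕ}

theorem iteratedDeriv_fun_mul_div_factorial {f g : 𝕜 → 𝕜} (hf : ContDiffAt 𝕜 N f x)
    (hg : ContDiffAt 𝕜 N g x) :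
    iteratedDeriv N (fun w ↦ f w * g w) x / N ! =
      ∑ k ∈ range (N + 1),
        iteratedDeriv k f x / k ! * (iteratedDeriv (N - k) g x / (N - k)!) := by
  have hN : (N ! : 𝕜) ≠ 0 := mod_cast N.factorial_ne_zero
  rw [iteratedDeriv_fun_mul hf hg, sum_div]
  refine sum_congr rfl fun k hk ↦ ?_
  rw [cast_choose 𝕜 (mem_range_succ_iff.mp hk)]
  field_simp

theorem iteratedDeriv_div_const_sub_pow_succ_div_factorial {a : 𝕜} (ha : x ≠ a) (n : ℕ)
    {g : 𝕜 → 𝕜} (hg : ContDiffAt 𝕜 N g x) :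
    iteratedDeriv N (fun w ↦ g w / (a - w) ^ (n + 1)) x / N ! =
      ∑ k ∈ range (N + 1),
        (n + k).choose k / (a - x) ^ (n + 1 + k) * (iteratedDeriv (N - k) g x / (N - k)!) := by
  have h_inv : ContDiffAt 𝕜 N (fun w ↦ ((a - w) ^ (n + 1))⁻¹) x :=
    ContDiffAt.inv (by fun_prop) (pow_ne_zero _ (sub_ne_zero.mpr ha.symm))
  simp only [div_eq_inv_mul (g _)]
  rw [iteratedDeriv_fun_mul_div_factorial h_inv hg]
  simp only [iteratedDeriv_inv_const_sub_pow_succ_div_factorial]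

theorem taylorLaurentE_eq_residue_general {z1 z2 : 𝕜} (h12 : z1 ≠ z2) {m n : ℕ} (hn : n < m)
    {g : 𝕜 → 𝕜} (hg : ContDiffAt 𝕜 (m - n - 1 : ℕ) g z1) :
    (z1 - z2) * ((1 / ((m - n - 1)! : 𝕜)) *
        iteratedDeriv (m - n - 1) (fun w ↦ g w / (w - z2) ^ (n + 1)) z1) =
      (-1) ^ n / (n ! : 𝕜) *
        ∑ k ∈ range (m - n),
          ((n + k)! : 𝕜) / (k ! * (m - n - k - 1)!) *
            iteratedDeriv (m - n - k - 1) g z1 / (z2 - z1) ^ (n + k) := by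
  obtain ⟨N, hN⟩ : ∃ N, m - n = N + 1 := ⟨m - n - 1, by lia⟩
  simp only [Nat.sub_right_comm _ _ 1, hN, Nat.add_sub_cancel] at hg ⊢
  have flip_sign (w : 𝕜) :
      g w / (w - z2) ^ (n + 1) = (-1) ^ (n + 1) * (g w / (z2 - w) ^ (n + 1)) := by
    rw [← neg_sub z2 w, neg_pow, div_mul_eq_div_div, div_eq_mul_inv (g w), ← inv_pow, inv_neg_one]
    ring
  calc
    _ = (-1) ^ n * ((z2 - z1) *
          (iteratedDeriv N (fun w ↦ g w / (z2 - w) ^ (n + 1)) z1 / N !)) := by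
      simp only [flip_sign, iteratedDeriv_const_mul_field]
      ring
    _ = _ := by
      rw [iteratedDeriv_div_const_sub_pow_succ_div_factorial h12 n hg]
      simp only [mul_sum]
      refine sum_congr rfl fun k _ ↦ ?_
      rw [← choose_symm_add, cast_add_choose 𝕜]
      field_simp
      ring

end

/-- Explicit formula for the Taylor–Laurent coefficient `e_n(z1,z2)`:
`(z1−z2)` times the residue at `z1` of `(w−z1)^{n−m}(w−z2)^{−n−1} g(w)` equals the
explicit finite sum. -/
theorem taylorLaurentE_eq_residue
    (z1 z2 : ℂ) (h12 : z1 ≠ z2) (m : ℕ) (hm : 1 ≤ m)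
    (g : ℂ → ℂ) (hg : AnalyticAt ℂ g z1)
    (n : ℕ) (hn : n ≤ m - 1) :
    (z1 - z2) * ((1 / (Nat.factorial (m - n - 1) : ℂ)) *
        iteratedDeriv (m - n - 1) (fun w => g w / (w - z2) ^ (n + 1)) z1)
    = ((-1 : ℂ) ^ n / (Nat.factorial n : ℂ)) *
        ∑ k ∈ Finset.range (m - n),
          ((Nat.factorial (n + k) : ℂ) /
              ((Nat.factorial k : ℂ) * (Nat.factorial (m - n - k - 1) : ℂ))) *
            iteratedDeriv (m - n - k - 1) g z1 / (z2 - z1) ^ (n + k) :=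
  taylorLaurentE_eq_residue_general h12 (by lia) hg.contDiffAt
end

section
/- Let c ∈ ℂ, R > 0, and let f : ℂ → ℂ be analytic on an open set containing the closed disk of center c and radius R. Let z1, z2 be distinct points of the open disk of center c and radius R. Then for every n ≥ 0, the two-point Taylor coefficient a_n(z1,z2) satisfies a_n(z1,z2) = (1/(2πi(z2−z1))) · ∮_{|w−c|=R} f(w)/((w−z1)^n (w−z2)^{n+1}) dw, where the integral is the circle integral over the circle of center c and radius R traversed counterclockwise. -/
/-!
By partial fractions, `1 / ((w - z₁) ^ n * (w - z₂) ^ (n + 1))` is a combination of negative powers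
of `w - z₁` and `w - z₂` whose coefficients come from the negative binomial series, and Cauchy's
formula for derivatives evaluates the integral of each term. Writing `u = w - z₁`, `v = w - z₂`,
the partial fractions are the identity
`∑ i ≤ p, C(q + i, q) x ^ i y ^ (q + 1) + ∑ j ≤ q, C(p + j, p) y ^ j x ^ (p + 1) = 1`
for `x = u / (u - v)` and `y = v / (v - u)`, divided by `u ^ (p + 1) * v ^ (q + 1)`.
Cauchy's formula at an arbitrary point `z` of the disk is obtained by lowering the order of the
pole: `f w = f z + (w - z) * dslope f z w`, and `(w - z) ^ (-k)` has zero integral for `k ≥ 2`.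
-/

open Finset Metric
open Complex (I)
open scoped Nat Real Topology

theorem one_sub_mul_sum_range_choose_mul_pow {A : Type*} [CommRing A] (y : A) (p m : ℕ) :
    (1 - y) * ∑ j ∈ range m, ((p + 1 + j).choose (p + 1) : A) * y ^ j =
      ∑ j ∈ range m, ((p + j).choose p : A) * y ^ j - ((p + m).choose (p + 1) : A) * y ^ m := by
  induction m with
  | zero => simp
  | succ m ih =>
    have pascal : ((p + 1 + m).choose (p + 1) : A) =
        (p + m).choose p + (p + m).choose (p + 1) := by
      rw [Nat.add_right_comm, Nat.choose_succ_succ, Nat.cast_add]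
    rw [sum_range_succ, mul_add, ih, sum_range_succ, ← Nat.add_assoc, Nat.add_right_comm p m 1,
      pascal]
    ring

theorem sum_choose_mul_pow_add_sum_choose_mul_pow_eq_one {A : Type*} [CommRing A] {x y : A}
    (hxy : x + y = 1) (p q : ℕ) :
    ∑ i ∈ range (p + 1), ((q + i).choose q : A) * x ^ i * y ^ (q + 1) +
      ∑ j ∈ range (q + 1), ((p + j).choose p : A) * y ^ j * x ^ (p + 1) = 1 := by
  obtain rfl : x = 1 - y := eq_sub_of_add_eq hxy
  simp only [← sum_mul]
  induction p with
  | zero => simp [mul_comm _ (1 - y), mul_neg_geom_sum]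
  | succ p ih =>
    have telescope := one_sub_mul_sum_range_choose_mul_pow y p (q + 1)
    have symm : (q + (p + 1)).choose q = (p + (q + 1)).choose (p + 1) := by
      rw [Nat.choose_symm_add, Nat.add_left_comm]
    rw [sum_range_succ, symm]
    linear_combination ih + (1 - y) ^ (p + 1) * telescope

/-- The `i`-th Taylor coefficient at `0` of `u ↦ (d + u) ^ (-(q + 1))`, as given by the negative
binomial series. The exponent is shifted by one so that it is always positive. -/
def invPowTaylorCoeff {K : Type*} [Field K] (d : K) (q i : ℕ) : K :=
  (-1) ^ i * (q + i).choose q / d ^ (q + 1 + i)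

theorem choose_mul_pow_div_eq_invPowTaylorCoeff {K : Type*} [Field K] {u v : K} (hu : u ≠ 0)
    (hv : v ≠ 0) (i j q : ℕ) :
    (q + i).choose q * (u / (u - v)) ^ i * (v / (v - u)) ^ (q + 1) /
        (u ^ (i + j + 1) * v ^ (q + 1)) =
      invPowTaylorCoeff (v - u) q i * (u ^ (j + 1))⁻¹ := by
  have hneg : u / (u - v) = -1 * (u / (v - u)) := by
    rw [← neg_sub v u, div_neg, neg_one_mul]
  rw [invPowTaylorCoeff, hneg, mul_pow, div_pow, div_pow]
  field_simp
  ring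

theorem sum_choose_mul_pow_div_eq_sum_invPowTaylorCoeff {K : Type*} [Field K] {u v : K}
    (hu : u ≠ 0) (hv : v ≠ 0) (p q : ℕ) :
    (∑ i ∈ range (p + 1), (q + i).choose q * (u / (u - v)) ^ i * (v / (v - u)) ^ (q + 1)) /
        (u ^ (p + 1) * v ^ (q + 1)) =
      ∑ ij ∈ antidiagonal p, invPowTaylorCoeff (v - u) q ij.1 * (u ^ (ij.2 + 1))⁻¹ := by
  rw [← Nat.sum_antidiagonal_eq_sum_range_succ_mk
    (fun ij ↦ (q + ij.1).choose q * (u / (u - v)) ^ ij.1 * (v / (v - u)) ^ (q + 1)), sum_div]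
  refine sum_congr rfl fun ij hij ↦ ?_
  rw [← mem_antidiagonal.1 hij]
  exact choose_mul_pow_div_eq_invPowTaylorCoeff hu hv ij.1 ij.2 q

theorem inv_pow_mul_pow_eq_sum_add_sum {K : Type*} [Field K] {u v : K}
    (hu : u ≠ 0) (hv : v ≠ 0) (huv : u ≠ v) (p q : ℕ) :
    (u ^ (p + 1) * v ^ (q + 1))⁻¹ =
      ∑ ij ∈ antidiagonal p, invPowTaylorCoeff (v - u) q ij.1 * (u ^ (ij.2 + 1))⁻¹ +
      ∑ ij ∈ antidiagonal q, invPowTaylorCoeff (u - v) p ij.1 * (v ^ (ij.2 + 1))⁻¹ := by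
  have hxy : u / (u - v) + v / (v - u) = 1 := by
    rw [← neg_sub u v, div_neg, ← sub_eq_add_neg, ← sub_div, div_self (sub_ne_zero.2 huv)]
  rw [← sum_choose_mul_pow_div_eq_sum_invPowTaylorCoeff hu hv,
    ← sum_choose_mul_pow_div_eq_sum_invPowTaylorCoeff hv hu,
    mul_comm (v ^ (q + 1)), ← add_div,
    sum_choose_mul_pow_add_sum_choose_mul_pow_eq_one hxy, one_div]

section Dslope

variable {𝕜 E : Type*} [NontriviallyNormedField 𝕜] [NormedAddCommGroup E] [NormedSpace 𝕜 E]
  {f : 𝕜 → E} {z : 𝕜}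

theorem factorial_nsmul_coeff_eq_iteratedDeriv [CompleteSpace E]
    {s : FormalMultilinearSeries 𝕜 𝕜 E} (hs : HasFPowerSeriesAt f s z) (m : ℕ) :
    m ! • s.coeff m = iteratedDeriv m f z := by
  obtain ⟨r, hr⟩ := hs
  exact hr.factorial_smul 1 m

theorem iteratedDeriv_succ_eq_nsmul_iteratedDeriv_dslope [CompleteSpace E]
    (hf : AnalyticAt 𝕜 f z) (m : ℕ) :
    iteratedDeriv (m + 1) f z = (m + 1) • iteratedDeriv m (dslope f z) z := by
  obtain ⟨s, hs⟩ := hf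
  rw [← factorial_nsmul_coeff_eq_iteratedDeriv hs,
    ← factorial_nsmul_coeff_eq_iteratedDeriv hs.has_fpower_series_dslope_fslope,
    FormalMultilinearSeries.coeff_fslope, Nat.factorial_succ, mul_nsmul']

theorem inv_sub_pow_succ_smul_eq_add_dslope (f : 𝕜 → E) {w : 𝕜} (hwz : w ≠ z) (k : ℕ) :
    ((w - z) ^ (k + 1))⁻¹ • f w =
      ((w - z) ^ (k + 1))⁻¹ • f z + ((w - z) ^ k)⁻¹ • dslope f z w := by
  have hinv : ((w - z) ^ k)⁻¹ = ((w - z) ^ (k + 1))⁻¹ * (w - z) := by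
    rw [pow_succ, mul_inv, inv_mul_cancel_right₀ (sub_ne_zero.2 hwz)]
  rw [hinv, mul_smul, sub_smul_dslope, ← smul_add, add_sub_cancel]

end Dslope

section CauchyIntegral

variable {E : Type*} [NormedAddCommGroup E] [NormedSpace ℂ E] {c z : ℂ} {R : ℝ} {f : ℂ → E}

theorem circleIntegrable_const_smul (hf : CircleIntegrable f c R) (a : ℂ) :
    CircleIntegrable (fun w ↦ a • f w) c R :=
  IntervalIntegrable.smul hf a

theorem circleIntegrable_inv_sub_pow_smul (hf : ContinuousOn f (sphere c R)) (hz : z ∈ ball c R)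
    (k : ℕ) : CircleIntegrable (fun w ↦ ((w - z) ^ k)⁻¹ • f w) c R := by
  have hne : ∀ w ∈ sphere c R, (w - z) ^ k ≠ 0 := fun w hw ↦
    pow_ne_zero k (sub_ne_zero.2 (sphere_disjoint_ball.ne_of_mem hw hz))
  exact ContinuousOn.circleIntegrable (pos_of_mem_ball hz).le
    ((ContinuousOn.inv₀ (by fun_prop) hne).smul hf)

theorem continuousOn_sphere_of_diffContOnCl_ball (hf : DiffContOnCl ℂ f (ball c R)) :
    ContinuousOn f (sphere c R) :=
  hf.continuousOn_ball.mono sphere_subset_closedBall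

theorem diffContOnCl_dslope_s15 [CompleteSpace E] {s : Set ℂ} (hf : DiffContOnCl ℂ f s)
    (hs : s ∈ 𝓝 z) : DiffContOnCl ℂ (dslope f z) s where
  differentiableOn := (Complex.differentiableOn_dslope hs).2 hf.differentiableOn
  continuousOn := (continuousOn_dslope (Filter.mem_of_superset hs subset_closure)).2
    ⟨hf.continuousOn, hf.differentiableAt' hs⟩

theorem circleIntegral_inv_sub_pow_add_two (c z : ℂ) (R : ℝ) (m : ℕ) :
    (∮ w in C(c, R), ((w - z) ^ (m + 2))⁻¹) = 0 := by
  have := circleIntegral.integral_sub_zpow_of_ne (n := -(m + 2 : ℕ)) (by omega) c z R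
  simpa only [zpow_neg, zpow_natCast] using this

theorem circleIntegral_inv_sub_pow_add_two_smul_eq_dslope [CompleteSpace E]
    (hf : DiffContOnCl ℂ f (ball c R)) (hz : z ∈ ball c R) (m : ℕ) :
    (∮ w in C(c, R), ((w - z) ^ (m + 2))⁻¹ • f w) =
      ∮ w in C(c, R), ((w - z) ^ (m + 1))⁻¹ • dslope f z w := by
  have hdslope := continuousOn_sphere_of_diffContOnCl_ball
    (diffContOnCl_dslope_s15 hf (isOpen_ball.mem_nhds hz))
  rw [circleIntegral.integral_congr (pos_of_mem_ball hz).le fun w hw ↦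
      inv_sub_pow_succ_smul_eq_add_dslope f (sphere_disjoint_ball.ne_of_mem hw hz) (m + 1),
    circleIntegral.integral_add (circleIntegrable_inv_sub_pow_smul continuousOn_const hz _)
      (circleIntegrable_inv_sub_pow_smul hdslope hz _),
    circleIntegral.integral_smul_const, circleIntegral_inv_sub_pow_add_two, zero_smul, zero_add]

theorem circleIntegral_inv_sub_pow_smul [CompleteSpace E] (hf : DiffContOnCl ℂ f (ball c R))
    (hz : z ∈ ball c R) (m : ℕ) :
    (∮ w in C(c, R), ((w - z) ^ (m + 1))⁻¹ • f w) =
      (2 * π * I : ℂ) • (m ! : ℂ)⁻¹ • iteratedDeriv m f z := by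
  induction m generalizing f with
  | zero => simpa using hf.circleIntegral_sub_inv_smul hz
  | succ m ih =>
    have hball : ball c R ∈ 𝓝 z := isOpen_ball.mem_nhds hz
    have hanalytic : AnalyticAt ℂ f z := hf.differentiableOn.analyticAt hball
    have hfactorial : (((m + 1)! : ℕ) : ℂ)⁻¹ * (m + 1 : ℕ) = (m ! : ℂ)⁻¹ := by
      rw [Nat.factorial_succ, Nat.cast_mul, mul_comm, mul_inv,
        mul_inv_cancel_left₀ (Nat.cast_ne_zero.2 m.succ_ne_zero)]
    rw [circleIntegral_inv_sub_pow_add_two_smul_eq_dslope hf hz,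
      ih (diffContOnCl_dslope_s15 hf hball),
      iteratedDeriv_succ_eq_nsmul_iteratedDeriv_dslope hanalytic,
      ← Nat.cast_smul_eq_nsmul ℂ, smul_smul (_⁻¹), hfactorial]

theorem circleIntegrable_sum_mul_inv_sub_pow_smul {ι : Type*} (s : Finset ι) (a : ι → ℂ)
    (k : ι → ℕ) (hf : ContinuousOn f (sphere c R)) (hz : z ∈ ball c R) :
    CircleIntegrable (fun w ↦ (∑ i ∈ s, a i * ((w - z) ^ k i)⁻¹) • f w) c R := by
  simp only [sum_smul, mul_smul]
  exact CircleIntegrable.fun_sum s fun i _ ↦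
    circleIntegrable_const_smul (circleIntegrable_inv_sub_pow_smul hf hz (k i)) (a i)

theorem circleIntegral_sum_mul_inv_sub_pow_smul [CompleteSpace E] {ι : Type*} (s : Finset ι)
    (a : ι → ℂ) (k : ι → ℕ) (hf : DiffContOnCl ℂ f (ball c R)) (hz : z ∈ ball c R) :
    (∮ w in C(c, R), (∑ i ∈ s, a i * ((w - z) ^ (k i + 1))⁻¹) • f w) =
      (2 * π * I : ℂ) • ∑ i ∈ s, (a i / (k i)!) • iteratedDeriv (k i) f z := by
  have hint : ∀ i ∈ s, CircleIntegrable (fun w ↦ a i • ((w - z) ^ (k i + 1))⁻¹ • f w) c R :=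
    fun i _ ↦ circleIntegrable_const_smul (circleIntegrable_inv_sub_pow_smul
      (continuousOn_sphere_of_diffContOnCl_ball hf) hz (k i + 1)) (a i)
  simp only [sum_smul, mul_smul _ (_⁻¹)]
  rw [circleIntegral.integral_fun_sum hint, smul_sum]
  refine sum_congr rfl fun i _ ↦ ?_
  rw [circleIntegral.integral_smul, circleIntegral_inv_sub_pow_smul hf hz, smul_comm (a i),
    smul_smul (a i), ← div_eq_mul_inv]

theorem circleIntegral_inv_sub_pow_mul_sub_pow_smul [CompleteSpace E] {z₁ z₂ : ℂ}
    (hf : DiffContOnCl ℂ f (ball c R)) (hz₁ : z₁ ∈ ball c R) (hz₂ : z₂ ∈ ball c R)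
    (hne : z₁ ≠ z₂) (p q : ℕ) :
    (∮ w in C(c, R), ((w - z₁) ^ (p + 1) * (w - z₂) ^ (q + 1))⁻¹ • f w) =
      (2 * π * I : ℂ) •
        (∑ ij ∈ antidiagonal p,
            (invPowTaylorCoeff (z₁ - z₂) q ij.1 / ij.2 !) • iteratedDeriv ij.2 f z₁ +
          ∑ ij ∈ antidiagonal q,
            (invPowTaylorCoeff (z₂ - z₁) p ij.1 / ij.2 !) • iteratedDeriv ij.2 f z₂) := by
  have hsphere := continuousOn_sphere_of_diffContOnCl_ball hf
  have partialFractions : Set.EqOn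
      (fun w ↦ ((w - z₁) ^ (p + 1) * (w - z₂) ^ (q + 1))⁻¹ • f w)
      (fun w ↦
        (∑ ij ∈ antidiagonal p,
          invPowTaylorCoeff (z₁ - z₂) q ij.1 * ((w - z₁) ^ (ij.2 + 1))⁻¹) • f w +
        (∑ ij ∈ antidiagonal q,
          invPowTaylorCoeff (z₂ - z₁) p ij.1 * ((w - z₂) ^ (ij.2 + 1))⁻¹) • f w)
      (sphere c R) := fun w hw ↦ by
    have hw₁ := sub_ne_zero.2 (sphere_disjoint_ball.ne_of_mem hw hz₁)
    have hw₂ := sub_ne_zero.2 (sphere_disjoint_ball.ne_of_mem hw hz₂)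
    simp only [inv_pow_mul_pow_eq_sum_add_sum hw₁ hw₂ (sub_right_injective.ne hne),
      sub_sub_sub_cancel_left, add_smul]
  rw [circleIntegral.integral_congr (pos_of_mem_ball hz₁).le partialFractions,
    circleIntegral.integral_add
      (circleIntegrable_sum_mul_inv_sub_pow_smul _ _ _ hsphere hz₁)
      (circleIntegrable_sum_mul_inv_sub_pow_smul _ _ _ hsphere hz₂),
    circleIntegral_sum_mul_inv_sub_pow_smul _ _ _ hf hz₁,
    circleIntegral_sum_mul_inv_sub_pow_smul _ _ _ hf hz₂, smul_add]

end CauchyIntegral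

theorem twoPointCoeff_zero (f : ℂ → ℂ) (z₁ z₂ : ℂ) :
    twoPointCoeff f z₁ z₂ 0 = (z₂ - z₁)⁻¹ * f z₂ := by
  rw [twoPointCoeff, if_pos rfl, div_eq_inv_mul]

theorem factorial_div_mul_eq_inv_neg_mul_invPowTaylorCoeff {K : Type*} [Field K] [CharZero K]
    (d : K) (n i j : ℕ) :
    (n + i)! / ((i + 1)! * j !) *
        ((-1) ^ (i + 1) * (i + 1 : ℕ) / (n ! * d ^ (n + (i + 1) + 1))) =
      (-d)⁻¹ * (invPowTaylorCoeff d n i / j !) := by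
  have hi : (i ! : K) ≠ 0 := Nat.cast_ne_zero.2 i.factorial_ne_zero
  have hn : (n ! : K) ≠ 0 := Nat.cast_ne_zero.2 n.factorial_ne_zero
  have hi' : ((i + 1 : ℕ) : K) ≠ 0 := Nat.cast_ne_zero.2 i.succ_ne_zero
  rw [invPowTaylorCoeff, Nat.cast_add_choose, Nat.factorial_succ, Nat.cast_mul]
  field_simp
  ring

theorem factorial_div_mul_eq_inv_neg_mul_invPowTaylorCoeff_neg {K : Type*} [Field K] [CharZero K]
    (d : K) (m k j : ℕ) :
    (m + k)! / (k ! * j !) *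
        ((-1) ^ (m + 2) * (m + 1 : ℕ) / ((m + 1)! * d ^ (m + 1 + k + 1))) =
      (-d)⁻¹ * (invPowTaylorCoeff (-d) m k / j !) := by
  have hk : (k ! : K) ≠ 0 := Nat.cast_ne_zero.2 k.factorial_ne_zero
  have hm : (m ! : K) ≠ 0 := Nat.cast_ne_zero.2 m.factorial_ne_zero
  have hm' : ((m + 1 : ℕ) : K) ≠ 0 := Nat.cast_ne_zero.2 m.succ_ne_zero
  have hsign : (-1) ^ k / (-d) ^ (m + 1 + k) = (-1) ^ (m + 1) / d ^ (m + 1 + k) := by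
    rw [neg_pow d, pow_add (-1), mul_comm _ ((-1) ^ k), mul_assoc, ← div_div,
      div_self (pow_ne_zero k (neg_ne_zero.2 one_ne_zero)), ← div_div, one_div, ← inv_pow,
      inv_neg_one]
  rw [invPowTaylorCoeff, mul_div_right_comm ((-1) ^ k), hsign, Nat.cast_add_choose,
    Nat.factorial_succ, Nat.cast_mul]
  field_simp
  ring

theorem twoPointCoeff_succ_eq_sum_antidiagonal (f : ℂ → ℂ) (z₁ z₂ : ℂ) (m : ℕ) :
    twoPointCoeff f z₁ z₂ (m + 1) = ∑ kj ∈ antidiagonal (m + 1),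
      ((m + kj.1)! / (kj.1 ! * kj.2 !) : ℂ) *
        (((-1) ^ (m + 2) * (m + 1 : ℕ) * iteratedDeriv kj.2 f z₂ +
            (-1) ^ kj.1 * kj.1 * iteratedDeriv kj.2 f z₁) /
          ((m + 1)! * (z₁ - z₂) ^ (m + 1 + kj.1 + 1))) := by
  rw [twoPointCoeff, if_neg m.succ_ne_zero, Nat.sum_antidiagonal_eq_sum_range_succ_mk]
  refine sum_congr rfl fun k _ ↦ ?_
  rw [Nat.add_right_comm, Nat.add_sub_cancel]

theorem twoPointCoeff_succ (f : ℂ → ℂ) (z₁ z₂ : ℂ) (m : ℕ) :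
    twoPointCoeff f z₁ z₂ (m + 1) = (z₂ - z₁)⁻¹ *
      (∑ ij ∈ antidiagonal m,
          invPowTaylorCoeff (z₁ - z₂) (m + 1) ij.1 / ij.2 ! * iteratedDeriv ij.2 f z₁ +
        ∑ ij ∈ antidiagonal (m + 1),
          invPowTaylorCoeff (z₂ - z₁) m ij.1 / ij.2 ! * iteratedDeriv ij.2 f z₂) := by
  simp only [twoPointCoeff_succ_eq_sum_antidiagonal, add_div, mul_add, sum_add_distrib, mul_sum]
  rw [add_comm, Nat.sum_antidiagonal_succ]
  congr 1
  · simp only [Nat.cast_zero, mul_zero, zero_mul, zero_div, zero_add]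
    refine sum_congr rfl fun ij _ ↦ ?_
    have hcoeff := factorial_div_mul_eq_inv_neg_mul_invPowTaylorCoeff (z₁ - z₂) (m + 1) ij.1 ij.2
    rw [neg_sub] at hcoeff
    rw [← mul_assoc, ← hcoeff, mul_div_right_comm, mul_assoc, add_comm ij.1 1, ← add_assoc m 1 ij.1]
  · refine sum_congr rfl fun kj _ ↦ ?_
    have hcoeff := factorial_div_mul_eq_inv_neg_mul_invPowTaylorCoeff_neg (z₁ - z₂) m kj.1 kj.2
    rw [neg_sub] at hcoeff
    rw [← mul_assoc, ← hcoeff, mul_div_right_comm, mul_assoc]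

theorem twoPointCoeff_eq_circleIntegral_general {c : ℂ} {R : ℝ} {f : ℂ → ℂ}
    (hf : DiffContOnCl ℂ f (ball c R)) {z₁ z₂ : ℂ} (hz₁ : z₁ ∈ ball c R) (hz₂ : z₂ ∈ ball c R)
    (hne : z₁ ≠ z₂) (n : ℕ) :
    twoPointCoeff f z₁ z₂ n =
      (1 / (2 * π * I * (z₂ - z₁))) *
        ∮ w in C(c, R), f w / ((w - z₁) ^ n * (w - z₂) ^ (n + 1)) := by
  have hcancel (s : ℂ) : 1 / (2 * π * I * (z₂ - z₁)) * (2 * π * I * s) = (z₂ - z₁)⁻¹ * s := by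
    rw [one_div, mul_inv_rev, mul_assoc, inv_mul_cancel_left₀ Complex.two_pi_I_ne_zero]
  simp only [div_eq_inv_mul (f _)]
  cases n with
  | zero =>
    have cauchy := hf.circleIntegral_sub_inv_smul hz₂
    simp only [smul_eq_mul] at cauchy
    simp only [pow_zero, one_mul, zero_add, pow_one, cauchy, hcancel, twoPointCoeff_zero]
  | succ m =>
    have cauchy := circleIntegral_inv_sub_pow_mul_sub_pow_smul hf hz₁ hz₂ hne m (m + 1)
    simp only [smul_eq_mul] at cauchy
    rw [cauchy, hcancel, twoPointCoeff_succ]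

/-- Cauchy integral representation of the two-point Taylor coefficients:
`a_n(z1,z2) = (1/(2πi(z2−z1))) ∮_{|w−c|=R} f(w)/((w−z1)^n (w−z2)^{n+1}) dw`. -/
theorem twoPointCoeff_eq_circleIntegral
    (c : ℂ) (R : ℝ) (hR : 0 < R) (f : ℂ → ℂ)
    (U : Set ℂ) (hU : IsOpen U) (hUB : Metric.closedBall c R ⊆ U)
    (hf : DifferentiableOn ℂ f U)
    (z1 z2 : ℂ) (hz1 : z1 ∈ Metric.ball c R) (hz2 : z2 ∈ Metric.ball c R)
    (h12 : z1 ≠ z2) (n : ℕ) :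
    twoPointCoeff f z1 z2 n =
      (1 / (2 * Real.pi * Complex.I * (z2 - z1))) *
        ∮ w in C(c, R), f w / ((w - z1) ^ n * (w - z2) ^ (n + 1)) :=
  twoPointCoeff_eq_circleIntegral_general
    (hf.mono (closure_ball_subset_closedBall.trans hUB)).diffContOnCl hz1 hz2 h12 n
end
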